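/- For every open pooling set P, the value of P under u satisfies the double integration-by-parts identity ∫_0^1 u(θ) dG_P(θ) = u(1) − u'(1)·(1 − E_F[θ]) + ∫_0^1 u''(θ) Γ_P(θ) dθ. Consequently, an open pooling set is optimal for u if and only if it maximizes ∫_0^1 u''(θ) Γ_P(θ) dθ over all open subsets of [0,1]. -/

import Mathlib

open MeasureTheory Set
open scoped Classical

noncomputable section

/-- CDF associated with the density `f` (relevant on `[0,1]`): `F(x) = ∫_0^x f`. -/
def cdfF (f : ℝ → ℝ) (x : ℝ) : ℝ := ∫ t in (0:ℝ)..x, f t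

/-- Conditional mean `E_F[θ | (ξ,ζ)]` of `θ` on the interval `(ξ, ζ)` under density `f`. -/
def condMean (f : ℝ → ℝ) (ξ ζ : ℝ) : ℝ :=
  (∫ t in ξ..ζ, t * f t) / (∫ t in ξ..ζ, f t)

/-- `f` is a strictly positive density of a probability measure on `[0,1]`. -/
def IsDensity (f : ℝ → ℝ) : Prop :=
  (∀ θ ∈ Icc (0:ℝ) 1, 0 < f θ) ∧ IntegrableOn f (Icc (0:ℝ) 1) ∧
    (∫ t in (0:ℝ)..1, f t) = 1

/-- An open pooling set: a relatively open subset of `[0,1]`. -/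
def IsPoolingSet (P : Set ℝ) : Prop :=
  ∃ U : Set ℝ, IsOpen U ∧ P = U ∩ Icc (0:ℝ) 1

/-- Left endpoint `ξ_i` of the interval component of `θ` in `P`. -/
def compInf (P : Set ℝ) (θ : ℝ) : ℝ := sInf (connectedComponentIn P θ)

/-- Right endpoint `ζ_i` of the interval component of `θ` in `P`. -/
def compSup (P : Set ℝ) (θ : ℝ) : ℝ := sSup (connectedComponentIn P θ)

/-- The posterior-mean map induced by the pooling set `P`: states in a pooled
interval are mapped to the conditional mean of that interval, other states to
themselves. -/
def poolMean (f : ℝ → ℝ) (P : Set ℝ) (θ : ℝ) : ℝ :=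
  if θ ∈ P then condMean f (compInf P θ) (compSup P θ) else θ

/-- The induced distribution `G_P` of posterior means. -/
def Gp (f : ℝ → ℝ) (P : Set ℝ) (θ : ℝ) : ℝ :=
  if θ ∈ P then
    (if θ < condMean f (compInf P θ) (compSup P θ) then cdfF f (compInf P θ)
     else cdfF f (compSup P θ))
  else cdfF f θ

/-- `Γ_P(θ) = ∫_0^θ G_P(t) dt`. -/
def Gam (f : ℝ → ℝ) (P : Set ℝ) (θ : ℝ) : ℝ := ∫ t in (0:ℝ)..θ, Gp f P t

/-- The value `∫_0^1 u(θ) dG_P(θ)` of the pooling set `P` under payoff `u`,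
written as the expectation of `u` composed with the posterior-mean map. -/
def poolValue (f : ℝ → ℝ) (u : ℝ → ℝ) (P : Set ℝ) : ℝ :=
  ∫ θ in (0:ℝ)..1, u (poolMean f P θ) * f θ

/-- `P` is an optimal pooling set for `u`. -/
def IsOptimal (f : ℝ → ℝ) (u : ℝ → ℝ) (P : Set ℝ) : Prop :=
  IsPoolingSet P ∧ ∀ Q : Set ℝ, IsPoolingSet Q → poolValue f u Q ≤ poolValue f u P

/-- `u` is continuously differentiable on `[0,1]` with derivative `u'`, and `u'`
is absolutely continuous with integrable a.e. derivative `u''` (encoded via the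
fundamental theorem of calculus). -/
def C1AC (u u' u'' : ℝ → ℝ) : Prop :=
  (∀ θ ∈ Icc (0:ℝ) 1, HasDerivAt u (u' θ) θ) ∧
  ContinuousOn u' (Icc (0:ℝ) 1) ∧
  IntegrableOn u'' (Icc (0:ℝ) 1) ∧
  (∀ θ ∈ Icc (0:ℝ) 1, u' θ = u' 0 + ∫ t in (0:ℝ)..θ, u'' t)

/-! Write `X` for the posterior mean as a function of the state. For an absolutely continuous `g` on
`[0, 1]` and an integrable weight `w`, Fubini turns `g (X θ) = g 1 - ∫ t in X θ..1, g' t` into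
`∫ g (X θ) w θ dθ = g 1 ∫ w - ∫ g' t W t dt`, where `W t` is the `w`-mass of `{X ≤ t}`.
Weighted by the density, `{X ≤ t}` has mass `G_P t`; hence this formula, applied to `u` and to the
identity, gives `∫ u dG_P = u 1 - ∫ u' G_P` and, since pooling preserves the mean,
`Γ_P 1 = 1 - E_F[θ]`. Applied to `u'`, with the identity as `X` and `G_P` as the weight, it gives
`∫ u' G_P = u' 1 Γ_P 1 - ∫ u'' Γ_P`. -/

section LayerCake

variable {α : Type*} {μ : Measure ℝ} {X w : α → ℝ} {g g' h : ℝ → ℝ} {a b : ℝ}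

lemma setIntegral_Iic_restrict_Icc {t : ℝ} (ht : t ∈ Icc a b) :
    ∫ x in Iic t, h x ∂volume.restrict (Icc a b) = ∫ x in a..t, h x := by
  have hIcc : Iic t ∩ Icc a b = Icc a t := by
    rw [inter_comm, ← Ici_inter_Iic, inter_assoc, Iic_inter_Iic, min_eq_right ht.2, Ici_inter_Iic]
  rw [Measure.restrict_restrict measurableSet_Iic, hIcc, integral_Icc_eq_integral_Ioc,
    intervalIntegral.integral_of_le ht.1]

lemma setIntegral_Ici_restrict_Icc {t : ℝ} (ht : t ∈ Icc a b) :
    ∫ x in Ici t, h x ∂volume.restrict (Icc a b) = ∫ x in t..b, h x := by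
  have hIcc : Ici t ∩ Icc a b = Icc t b := by
    rw [← Ici_inter_Iic, ← inter_assoc, Ici_inter_Ici, max_eq_left ht.1, Ici_inter_Iic]
  rw [Measure.restrict_restrict measurableSet_Ici, hIcc, integral_Icc_eq_integral_Ioc,
    intervalIntegral.integral_of_le ht.2]

lemma integral_indicator_comp_le_mul_right (x : α) :
    ∫ t, {p : α × ℝ | X p.1 ≤ p.2}.indicator (fun p => w p.1 * h p.2) (x, t) ∂μ =
      w x * ∫ t in Ici (X x), h t ∂μ := by
  rw [← integral_const_mul, ← integral_indicator measurableSet_Ici]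
  rfl

variable [MeasurableSpace α] {ν : Measure α}

lemma integrable_indicator_comp_le_mul [SFinite ν] [SFinite μ] (hX : AEMeasurable X ν)
    (hw : Integrable w ν) (hh : Integrable h μ) :
    Integrable ({p : α × ℝ | X p.1 ≤ p.2}.indicator fun p => w p.1 * h p.2) (ν.prod μ) :=
  (hw.mul_prod hh).indicator₀ (nullMeasurableSet_le hX.comp_fst measurable_snd.aemeasurable)

lemma integral_indicator_comp_le_mul_left (hX : AEMeasurable X ν) (t : ℝ) :
    ∫ x, {p : α × ℝ | X p.1 ≤ p.2}.indicator (fun p => w p.1 * h p.2) (x, t) ∂ν =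
      h t * ∫ x in {x | X x ≤ t}, w x ∂ν := by
  rw [mul_comm, ← integral_mul_const,
    ← integral_indicator₀ (nullMeasurableSet_le hX aemeasurable_const)]
  rfl

lemma integrable_mul_setIntegral_Ici_comp [SFinite ν] [SFinite μ] (hX : AEMeasurable X ν)
    (hw : Integrable w ν) (hh : Integrable h μ) :
    Integrable (fun x => w x * ∫ t in Ici (X x), h t ∂μ) ν := by
  simpa only [integral_indicator_comp_le_mul_right] using
    (integrable_indicator_comp_le_mul hX hw hh).integral_prod_left

lemma integral_mul_setIntegral_Ici_comp [SFinite ν] [SFinite μ] (hX : AEMeasurable X ν)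
    (hw : Integrable w ν) (hh : Integrable h μ) :
    ∫ x, w x * ∫ t in Ici (X x), h t ∂μ ∂ν = ∫ t, h t * ∫ x in {x | X x ≤ t}, w x ∂ν ∂μ := by
  simpa only [integral_indicator_comp_le_mul_right, integral_indicator_comp_le_mul_left hX] using
    integral_integral_swap (f := fun x t => {p : α × ℝ | X p.1 ≤ p.2}.indicator
      (fun p => w p.1 * h p.2) (x, t)) (integrable_indicator_comp_le_mul hX hw hh)

lemma integral_comp_mul_eq_sub_integral_deriv_mul_setIntegral [SFinite ν] (hab : a ≤ b)
    (hX : AEMeasurable X ν) (hX_mem : ∀ᵐ x ∂ν, X x ∈ Icc a b) (hw : Integrable w ν)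
    (hg' : IntegrableOn g' (Icc a b)) (hg : ∀ x ∈ Icc a b, ∫ t in x..b, g' t = g b - g x) :
    ∫ x, g (X x) * w x ∂ν =
      g b * ∫ x, w x ∂ν - ∫ t in a..b, g' t * ∫ x in {x | X x ≤ t}, w x ∂ν :=
  calc ∫ x, g (X x) * w x ∂ν
      = ∫ x, (g b * w x - w x * ∫ t in Ici (X x), g' t ∂volume.restrict (Icc a b)) ∂ν := by
        refine integral_congr_ae ?_
        filter_upwards [hX_mem] with x hx
        rw [setIntegral_Ici_restrict_Icc hx, hg _ hx]
        ring
    _ = g b * ∫ x, w x ∂ν - ∫ t in Icc a b, g' t * ∫ x in {x | X x ≤ t}, w x ∂ν := by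
        rw [integral_sub (hw.const_mul _) (integrable_mul_setIntegral_Ici_comp hX hw hg'),
          integral_const_mul, integral_mul_setIntegral_Ici_comp hX hw hg']
    _ = g b * ∫ x, w x ∂ν - ∫ t in a..b, g' t * ∫ x in {x | X x ≤ t}, w x ∂ν := by
        rw [integral_Icc_eq_integral_Ioc, intervalIntegral.integral_of_le hab]

lemma intervalIntegral_mul_eq_sub_integral_deriv_mul_primitive (hab : a ≤ b)
    (hh : IntegrableOn h (Icc a b)) (hg' : IntegrableOn g' (Icc a b))
    (hg : ∀ x ∈ Icc a b, ∫ t in x..b, g' t = g b - g x) :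
    ∫ t in a..b, g t * h t =
      g b * (∫ t in a..b, h t) - ∫ t in a..b, g' t * ∫ s in a..t, h s := by
  have hprimitive : ∫ t in a..b, g' t * ∫ s in {s | s ≤ t}, h s ∂volume.restrict (Icc a b) =
      ∫ t in a..b, g' t * ∫ s in a..t, h s := by
    refine intervalIntegral.integral_congr fun t ht => ?_
    rw [uIcc_of_le hab] at ht
    exact congrArg (g' t * ·) (setIntegral_Iic_restrict_Icc ht)
  have hparts := integral_comp_mul_eq_sub_integral_deriv_mul_setIntegral hab aemeasurable_id
    (ae_restrict_mem measurableSet_Icc) hh hg' hg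
  simp only [id, integral_Icc_eq_integral_Ioc,
    ← intervalIntegral.integral_of_le (E := ℝ) (μ := volume) hab] at hparts
  rw [hparts, hprimitive]

end LayerCake

section ConnectedComponents

lemma sUnion_image_connectedComponentIn {X : Type*} [TopologicalSpace X] (F : Set X) :
    ⋃₀ (connectedComponentIn F '' F) = F := by
  refine Subset.antisymm (sUnion_subset ?_) fun x hx =>
    mem_sUnion_of_mem (mem_connectedComponentIn hx) (mem_image_of_mem _ hx)
  rintro _ ⟨x, -, rfl⟩
  exact connectedComponentIn_subset F x

lemma mem_connectedComponentIn_symm {X : Type*} [TopologicalSpace X] {F : Set X} {x y : X}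
    (hy : y ∈ connectedComponentIn F x) : x ∈ connectedComponentIn F y := by
  rw [← connectedComponentIn_eq hy]
  exact mem_connectedComponentIn (connectedComponentIn_nonempty_iff.1 ⟨y, hy⟩)

lemma pairwiseDisjoint_range_connectedComponentIn {X : Type*} [TopologicalSpace X] (F : Set X) :
    (range (connectedComponentIn F)).PairwiseDisjoint id := by
  rintro _ ⟨x, rfl⟩ _ ⟨y, rfl⟩ hne
  refine disjoint_left.2 fun z hzx hzy => hne ?_
  exact (connectedComponentIn_eq hzx).trans (connectedComponentIn_eq hzy).symm

lemma setIntegral_eq_zero_of_forall_connectedComponentIn {μ : Measure ℝ} {P : Set ℝ} {g : ℝ → ℝ}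
    (hg : IntegrableOn g P μ) (hP : ∀ x ∈ P, (connectedComponentIn P x).Nontrivial)
    (hzero : ∀ x ∈ P, ∫ t in connectedComponentIn P x, g t ∂μ = 0) :
    ∫ t in P, g t ∂μ = 0 := by
  have hdisj : (connectedComponentIn P '' P).PairwiseDisjoint id :=
    (pairwiseDisjoint_range_connectedComponentIn P).subset (image_subset_range _ _)
  have hcount : (connectedComponentIn P '' P).Countable := by
    refine hdisj.countable_of_nonempty_interior ?_
    rintro _ ⟨x, hx, rfl⟩
    exact isPreconnected_connectedComponentIn.ordConnected.convex.nontrivial_iff_nonempty_interior.1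
      (hP x hx)
  have hcover : ⋃ C : connectedComponentIn P '' P, (C : Set ℝ) = P := by
    rw [← sUnion_eq_iUnion, sUnion_image_connectedComponentIn]
  have := hcount.to_subtype
  rw [← hcover] at hg
  rw [← hcover, integral_iUnion ?_ (hdisj.on_injective Subtype.val_injective Subtype.prop) hg]
  · convert tsum_zero with C
    obtain ⟨_, x, hx, rfl⟩ := C
    exact hzero x hx
  · rintro ⟨_, x, -, rfl⟩
    exact isPreconnected_connectedComponentIn.ordConnected.measurableSet

end ConnectedComponents

section ConditionalMean

variable {f : ℝ → ℝ} {a b : ℝ}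

lemma condMean_mul_integral (hmass : ∫ t in a..b, f t ≠ 0) :
    condMean f a b * ∫ t in a..b, f t = ∫ t in a..b, t * f t :=
  div_mul_cancel₀ _ hmass

lemma condMean_mem_Ioo (hab : a < b) (hint : IntervalIntegrable f volume a b)
    (hpos : ∀ t ∈ Ioo a b, 0 < f t) : condMean f a b ∈ Ioo a b := by
  have hmass : 0 < ∫ t in a..b, f t :=
    intervalIntegral.intervalIntegral_pos_of_pos_on hint hpos hab
  have hint_mul : IntervalIntegrable (fun t => t * f t) volume a b :=
    hint.continuousOn_mul continuousOn_id
  have hleft : 0 < ∫ t in a..b, (t * f t - a * f t) :=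
    intervalIntegral.intervalIntegral_pos_of_pos_on (hint_mul.sub (hint.const_mul a))
      (fun t ht => by nlinarith [hpos t ht, ht.1]) hab
  have hright : 0 < ∫ t in a..b, (b * f t - t * f t) :=
    intervalIntegral.intervalIntegral_pos_of_pos_on ((hint.const_mul b).sub hint_mul)
      (fun t ht => by nlinarith [hpos t ht, ht.2]) hab
  rw [intervalIntegral.integral_sub hint_mul (hint.const_mul a),
    intervalIntegral.integral_const_mul, sub_pos] at hleft
  rw [intervalIntegral.integral_sub (hint.const_mul b) hint_mul,
    intervalIntegral.integral_const_mul, sub_pos] at hright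
  exact ⟨(lt_div_iff₀ hmass).2 hleft, (div_lt_iff₀ hmass).2 hright⟩

end ConditionalMean

namespace IsPoolingSet

open scoped Topology

variable {P : Set ℝ} {x : ℝ}

lemma subset_Icc (hP : IsPoolingSet P) : P ⊆ Icc 0 1 := by
  obtain ⟨U, -, rfl⟩ := hP
  exact inter_subset_right

lemma measurableSet (hP : IsPoolingSet P) : MeasurableSet P := by
  obtain ⟨U, hU, rfl⟩ := hP
  exact hU.measurableSet.inter measurableSet_Icc

lemma connectedComponentIn_subset_Icc (hP : IsPoolingSet P) (x : ℝ) :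
    connectedComponentIn P x ⊆ Icc (compInf P x) (compSup P x) := by
  have hsub := (connectedComponentIn_subset P x).trans hP.subset_Icc
  exact fun y hy =>
    ⟨csInf_le (bddBelow_Icc.mono hsub) hy, le_csSup (bddAbove_Icc.mono hsub) hy⟩

lemma Ioo_subset_connectedComponentIn (hP : IsPoolingSet P) (hx : x ∈ P) :
    Ioo (compInf P x) (compSup P x) ⊆ connectedComponentIn P x := by
  have hsub := (connectedComponentIn_subset P x).trans hP.subset_Icc
  exact (isConnected_connectedComponentIn_iff.2 hx).Ioo_csInf_csSup_subset
    (bddBelow_Icc.mono hsub) (bddAbove_Icc.mono hsub)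

lemma connectedComponentIn_ae_eq_Ioc (hP : IsPoolingSet P) (hx : x ∈ P) :
    connectedComponentIn P x =ᵐ[volume] Ioc (compInf P x) (compSup P x) :=
  Filter.EventuallyLE.antisymm
    ((hP.connectedComponentIn_subset_Icc x).eventuallyLE.trans Ioc_ae_eq_Icc.symm.le)
    (Ioo_ae_eq_Ioc.symm.le.trans (hP.Ioo_subset_connectedComponentIn hx).eventuallyLE)

lemma mem_Icc_compInf_compSup (hP : IsPoolingSet P) (hx : x ∈ P) :
    x ∈ Icc (compInf P x) (compSup P x) :=
  hP.connectedComponentIn_subset_Icc x (mem_connectedComponentIn hx)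

lemma Ioc_compInf_subset (hP : IsPoolingSet P) (hx : x ∈ P) :
    Ioc (compInf P x) x ⊆ connectedComponentIn P x := by
  intro y hy
  obtain rfl | hyx := hy.2.eq_or_lt
  · exact mem_connectedComponentIn hx
  · exact hP.Ioo_subset_connectedComponentIn hx
      ⟨hy.1, hyx.trans_le (hP.mem_Icc_compInf_compSup hx).2⟩

lemma Ico_compSup_subset (hP : IsPoolingSet P) (hx : x ∈ P) :
    Ico x (compSup P x) ⊆ connectedComponentIn P x := by
  intro y hy
  obtain rfl | hxy := hy.1.eq_or_lt
  · exact mem_connectedComponentIn hx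
  · exact hP.Ioo_subset_connectedComponentIn hx
      ⟨(hP.mem_Icc_compInf_compSup hx).1.trans_lt hxy, hy.2⟩

lemma Icc_compInf_compSup_subset (hP : IsPoolingSet P) (hx : x ∈ P) :
    Icc (compInf P x) (compSup P x) ⊆ Icc 0 1 := by
  have hne := connectedComponentIn_nonempty_iff.2 hx
  have hsub := (connectedComponentIn_subset P x).trans hP.subset_Icc
  exact Icc_subset_Icc (le_csInf hne fun y hy => (hsub hy).1) (csSup_le hne fun y hy => (hsub hy).2)

lemma connectedComponentIn_mem_nhdsWithin (hP : IsPoolingSet P) (hx : x ∈ P) :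
    connectedComponentIn P x ∈ 𝓝[Icc 0 1] x := by
  obtain ⟨U, hU, rfl⟩ := hP
  obtain ⟨ε, hε, hball⟩ := Metric.isOpen_iff.1 hU x hx.1
  refine Metric.mem_nhdsWithin_iff.2 ⟨ε, hε, ?_⟩
  exact ((convex_ball x ε).inter (convex_Icc 0 1)).isPreconnected.subset_connectedComponentIn
    ⟨Metric.mem_ball_self hε, hx.2⟩ (inter_subset_inter_left _ hball)

lemma nontrivial_connectedComponentIn (hP : IsPoolingSet P) (hx : x ∈ P) :
    (connectedComponentIn P x).Nontrivial := by
  have hacc : AccPt x (Filter.principal (Icc 0 1)) :=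
    isPreconnected_Icc.preperfect_of_nontrivial ⟨0, by simp, 1, by simp, zero_ne_one⟩ x
      (hP.subset_Icc hx)
  have hnhds := eventually_nhdsWithin_iff.1 (hP.connectedComponentIn_mem_nhdsWithin hx)
  obtain ⟨y, ⟨hyx, hy⟩, hyC⟩ := ((accPt_iff_frequently.1 hacc).and_eventually hnhds).exists
  exact ⟨y, hyC hy, x, mem_connectedComponentIn hx, hyx⟩

lemma compInf_lt_compSup (hP : IsPoolingSet P) (hx : x ∈ P) : compInf P x < compSup P x := by
  obtain ⟨y, hy, z, hz, hyz⟩ := (hP.nontrivial_connectedComponentIn hx).exists_lt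
  exact (hP.connectedComponentIn_subset_Icc x hy).1.trans_lt
    (hyz.trans_le (hP.connectedComponentIn_subset_Icc x hz).2)

end IsPoolingSet

section PosteriorMean

variable {f : ℝ → ℝ} {P : Set ℝ} {x y : ℝ}

lemma poolMean_eq_of_mem_connectedComponentIn (hy : y ∈ connectedComponentIn P x) :
    poolMean f P y = poolMean f P x := by
  have hxP : x ∈ P := connectedComponentIn_nonempty_iff.1 ⟨y, hy⟩
  have hyP : y ∈ P := connectedComponentIn_subset P x hy
  rw [poolMean, poolMean, if_pos hxP, if_pos hyP, compInf, compSup, compInf, compSup,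
    connectedComponentIn_eq hy]

lemma continuousOn_poolMean (hP : IsPoolingSet P) : ContinuousOn (poolMean f P) P := by
  intro x hx
  have hC : connectedComponentIn P x ∈ nhdsWithin x P :=
    nhdsWithin_mono x hP.subset_Icc (hP.connectedComponentIn_mem_nhdsWithin hx)
  refine continuousWithinAt_const.congr_of_eventuallyEq ?_ rfl
  filter_upwards [hC] with y hy using poolMean_eq_of_mem_connectedComponentIn hy

lemma measurable_poolMean (hP : IsPoolingSet P) : Measurable (poolMean f P) := by
  have hpiecewise : P.piecewise (poolMean f P) id = poolMean f P := by
    ext x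
    by_cases hx : x ∈ P <;> simp [poolMean, hx]
  rw [← hpiecewise]
  exact (continuousOn_poolMean hP).measurable_piecewise continuousOn_id hP.measurableSet

lemma IsDensity.intervalIntegrable (hf : IsDensity f) (hxy : x ≤ y) (hsub : Icc x y ⊆ Icc 0 1) :
    IntervalIntegrable f volume x y :=
  (intervalIntegrable_iff_integrableOn_Icc_of_le hxy).2 (hf.2.1.mono_set hsub)

lemma poolMean_mem_Ioo (hf : IsDensity f) (hP : IsPoolingSet P) (hx : x ∈ P) :
    poolMean f P x ∈ Ioo (compInf P x) (compSup P x) := by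
  have hlt := hP.compInf_lt_compSup hx
  have hsub := hP.Icc_compInf_compSup_subset hx
  rw [poolMean, if_pos hx]
  exact condMean_mem_Ioo hlt (hf.intervalIntegrable hlt.le hsub)
    fun t ht => hf.1 t (hsub (Ioo_subset_Icc_self ht))

lemma poolMean_mem_Icc (hf : IsDensity f) (hP : IsPoolingSet P) (hx : x ∈ Icc 0 1) :
    poolMean f P x ∈ Icc 0 1 := by
  by_cases hxP : x ∈ P
  · exact hP.Icc_compInf_compSup_subset hxP (Ioo_subset_Icc_self (poolMean_mem_Ioo hf hP hxP))
  · rwa [poolMean, if_neg hxP]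

lemma integrableOn_poolMean_mul (hf : IsDensity f) (hP : IsPoolingSet P) :
    IntegrableOn (fun x => poolMean f P x * f x) (Icc 0 1) := by
  refine Integrable.bdd_mul (c := 1) hf.2.1 (measurable_poolMean hP).aestronglyMeasurable ?_
  filter_upwards [ae_restrict_mem measurableSet_Icc] with x hx
  obtain ⟨hnonneg, hle⟩ := poolMean_mem_Icc hf hP hx
  rwa [Real.norm_of_nonneg hnonneg]

lemma setIntegral_connectedComponentIn_poolMean_mul (hf : IsDensity f) (hP : IsPoolingSet P)
    (hx : x ∈ P) :
    ∫ t in connectedComponentIn P x, poolMean f P t * f t =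
      ∫ t in connectedComponentIn P x, t * f t := by
  have hlt := hP.compInf_lt_compSup hx
  have hsub := hP.Icc_compInf_compSup_subset hx
  have hmass : 0 < ∫ t in compInf P x..compSup P x, f t :=
    intervalIntegral.intervalIntegral_pos_of_pos_on (hf.intervalIntegrable hlt.le hsub)
      (fun t ht => hf.1 t (hsub (Ioo_subset_Icc_self ht))) hlt
  calc ∫ t in connectedComponentIn P x, poolMean f P t * f t
      = ∫ t in connectedComponentIn P x, poolMean f P x * f t :=
        setIntegral_congr_fun isPreconnected_connectedComponentIn.ordConnected.measurableSet
          fun t ht => congrArg (· * f t) (poolMean_eq_of_mem_connectedComponentIn ht)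
    _ = poolMean f P x * ∫ t in compInf P x..compSup P x, f t := by
        rw [integral_const_mul, setIntegral_congr_set (hP.connectedComponentIn_ae_eq_Ioc hx),
          intervalIntegral.integral_of_le hlt.le]
    _ = ∫ t in compInf P x..compSup P x, t * f t := by
        rw [poolMean, if_pos hx, condMean_mul_integral hmass.ne']
    _ = ∫ t in connectedComponentIn P x, t * f t := by
        rw [setIntegral_congr_set (hP.connectedComponentIn_ae_eq_Ioc hx),
          intervalIntegral.integral_of_le hlt.le]

lemma integral_poolMean_mul (hf : IsDensity f) (hP : IsPoolingSet P) :
    ∫ x in (0 : ℝ)..1, poolMean f P x * f x = ∫ x in (0 : ℝ)..1, x * f x := by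
  have hpool := integrableOn_poolMean_mul hf hP
  have hid : IntegrableOn (fun x => x * f x) (Icc 0 1) :=
    hf.2.1.continuousOn_mul continuousOn_id isCompact_Icc
  have hpooled : ∫ x in P, (poolMean f P x * f x - x * f x) = 0 := by
    refine setIntegral_eq_zero_of_forall_connectedComponentIn
      ((hpool.sub hid).mono_set hP.subset_Icc) (fun x => hP.nontrivial_connectedComponentIn)
      fun x hx => ?_
    have hC := (connectedComponentIn_subset P x).trans hP.subset_Icc
    rw [integral_sub (hpool.mono_set hC) (hid.mono_set hC),
      setIntegral_connectedComponentIn_poolMean_mul hf hP hx, sub_self]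
  have hunit : ∫ x in Icc 0 1, (poolMean f P x * f x - x * f x) = 0 := by
    refine (setIntegral_eq_of_subset_of_forall_sdiff_eq_zero measurableSet_Icc hP.subset_Icc
      ?_).trans hpooled
    rintro x ⟨-, hx⟩
    rw [poolMean, if_neg hx, sub_self]
  rw [integral_sub hpool hid, sub_eq_zero] at hunit
  simpa only [intervalIntegral.integral_of_le zero_le_one, integral_Icc_eq_integral_Ioc] using hunit

end PosteriorMean

section PosteriorDistribution

variable {f : ℝ → ℝ} {P : Set ℝ} {x s : ℝ}

lemma poolMean_lt (hf : IsDensity f) (hP : IsPoolingSet P) (hxs : x < s)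
    (hs : s ∉ connectedComponentIn P x) : poolMean f P x < s := by
  by_cases hx : x ∈ P
  · refine (poolMean_mem_Ioo hf hP hx).2.trans_le (not_lt.1 fun hlt => hs ?_)
    exact hP.Ico_compSup_subset hx ⟨hxs.le, hlt⟩
  · rwa [poolMean, if_neg hx]

lemma lt_poolMean (hf : IsDensity f) (hP : IsPoolingSet P) (hsx : s < x)
    (hs : s ∉ connectedComponentIn P x) : s < poolMean f P x := by
  by_cases hx : x ∈ P
  · refine lt_of_le_of_lt (not_lt.1 fun hlt => hs ?_) (poolMean_mem_Ioo hf hP hx).1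
    exact hP.Ioc_compInf_subset hx ⟨hlt, hsx.le⟩
  · rwa [poolMean, if_neg hx]

/-- The state at which the posterior mean crosses the level `s`: an endpoint of the pooled interval
containing `s`, or `s` itself if `s` is not pooled. It is the state whose `F`-mass gives `G_P s`. -/
def poolCutoff (f : ℝ → ℝ) (P : Set ℝ) (s : ℝ) : ℝ :=
  if s ∈ P then
    (if s < condMean f (compInf P s) (compSup P s) then compInf P s else compSup P s)
  else s

lemma Gp_eq_cdfF_poolCutoff : Gp f P s = cdfF f (poolCutoff f P s) := by
  unfold Gp poolCutoff
  split_ifs <;> rfl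

lemma poolCutoff_mem_Icc (hP : IsPoolingSet P) (hs : s ∈ Icc 0 1) :
    poolCutoff f P s ∈ Icc 0 1 := by
  unfold poolCutoff
  split_ifs with hsP
  · exact hP.Icc_compInf_compSup_subset hsP (left_mem_Icc.2 (hP.compInf_lt_compSup hsP).le)
  · exact hP.Icc_compInf_compSup_subset hsP (right_mem_Icc.2 (hP.compInf_lt_compSup hsP).le)
  · exact hs

lemma poolMean_le_of_lt_poolCutoff (hf : IsDensity f) (hP : IsPoolingSet P)
    (hx : x < poolCutoff f P s) : poolMean f P x ≤ s := by
  by_cases hxC : x ∈ connectedComponentIn P s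
  · have hs : s ∈ P := connectedComponentIn_nonempty_iff.1 ⟨x, hxC⟩
    rw [poolMean_eq_of_mem_connectedComponentIn hxC, poolMean, if_pos hs]
    by_contra! hlt
    rw [poolCutoff, if_pos hs, if_pos hlt] at hx
    exact hx.not_ge (hP.connectedComponentIn_subset_Icc s hxC).1
  · refine (poolMean_lt hf hP ?_ (mt mem_connectedComponentIn_symm hxC)).le
    unfold poolCutoff at hx
    split_ifs at hx with hs hlt
    · exact hx.trans_le (hP.mem_Icc_compInf_compSup hs).1
    · exact not_le.1 fun hsx => hxC (hP.Ico_compSup_subset hs ⟨hsx, hx⟩)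
    · exact hx

lemma lt_poolMean_of_poolCutoff_lt (hf : IsDensity f) (hP : IsPoolingSet P)
    (hx : poolCutoff f P s < x) : s < poolMean f P x := by
  by_cases hxC : x ∈ connectedComponentIn P s
  · have hs : s ∈ P := connectedComponentIn_nonempty_iff.1 ⟨x, hxC⟩
    rw [poolMean_eq_of_mem_connectedComponentIn hxC, poolMean, if_pos hs]
    by_contra hlt
    rw [poolCutoff, if_pos hs, if_neg hlt] at hx
    exact hx.not_ge (hP.connectedComponentIn_subset_Icc s hxC).2
  · refine lt_poolMean hf hP ?_ (mt mem_connectedComponentIn_symm hxC)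
    unfold poolCutoff at hx
    split_ifs at hx with hs hlt
    · exact not_le.1 fun hxs => hxC (hP.Ioc_compInf_subset hs ⟨hx, hxs⟩)
    · exact (hP.mem_Icc_compInf_compSup hs).2.trans_lt hx
    · exact hx

lemma setOf_poolMean_le_ae_eq_Iic (hf : IsDensity f) (hP : IsPoolingSet P) (s : ℝ) :
    {x | poolMean f P x ≤ s} =ᵐ[volume] Iic (poolCutoff f P s) := by
  have hIio : Iio (poolCutoff f P s) ⊆ {x | poolMean f P x ≤ s} := fun x hx =>
    poolMean_le_of_lt_poolCutoff hf hP hx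
  have hIic : {x | poolMean f P x ≤ s} ⊆ Iic (poolCutoff f P s) := fun x hx =>
    not_lt.1 fun hlt => (lt_poolMean_of_poolCutoff_lt hf hP hlt).not_ge hx
  exact Filter.EventuallyLE.antisymm hIic.eventuallyLE
    (Iio_ae_eq_Iic.symm.le.trans hIio.eventuallyLE)

lemma Gp_eq_setIntegral (hf : IsDensity f) (hP : IsPoolingSet P) (hs : s ∈ Icc 0 1) :
    Gp f P s = ∫ x in {x | poolMean f P x ≤ s}, f x ∂volume.restrict (Icc 0 1) := by
  rw [setIntegral_congr_set (ae_restrict_of_ae (setOf_poolMean_le_ae_eq_Iic hf hP s)),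
    setIntegral_Iic_restrict_Icc (poolCutoff_mem_Icc hP hs), Gp_eq_cdfF_poolCutoff, cdfF]

lemma monotoneOn_Gp (hf : IsDensity f) (hP : IsPoolingSet P) :
    MonotoneOn (Gp f P) (Icc 0 1) := by
  intro s hs t ht hst
  rw [Gp_eq_setIntegral hf hP hs, Gp_eq_setIntegral hf hP ht]
  have hsub : {x | poolMean f P x ≤ s} ⊆ {x | poolMean f P x ≤ t} := fun _ hx => le_trans hx hst
  refine setIntegral_mono_set hf.2.1.integrableOn (ae_restrict_of_ae ?_) hsub.eventuallyLE
  filter_upwards [ae_restrict_mem measurableSet_Icc] with x hx using (hf.1 x hx).le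

lemma integral_comp_poolMean_mul (hf : IsDensity f) (hP : IsPoolingSet P) {g g' : ℝ → ℝ}
    (hg' : IntegrableOn g' (Icc 0 1))
    (hg : ∀ x ∈ Icc (0 : ℝ) 1, ∫ t in x..1, g' t = g 1 - g x) :
    ∫ x in (0 : ℝ)..1, g (poolMean f P x) * f x =
      g 1 - ∫ t in (0 : ℝ)..1, g' t * Gp f P t := by
  have hmem : ∀ᵐ x ∂volume.restrict (Icc (0 : ℝ) 1), poolMean f P x ∈ Icc 0 1 := by
    filter_upwards [ae_restrict_mem measurableSet_Icc] with x hx using poolMean_mem_Icc hf hP hx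
  have hGp : ∫ t in (0 : ℝ)..1, g' t * Gp f P t =
      ∫ t in (0 : ℝ)..1, g' t *
        ∫ x in {x | poolMean f P x ≤ t}, f x ∂volume.restrict (Icc 0 1) := by
    refine intervalIntegral.integral_congr fun t ht => ?_
    rw [uIcc_of_le zero_le_one] at ht
    exact congrArg (g' t * ·) (Gp_eq_setIntegral hf hP ht)
  have hmass : ∫ x in Icc 0 1, f x = 1 := by
    rw [integral_Icc_eq_integral_Ioc, ← intervalIntegral.integral_of_le zero_le_one, hf.2.2]
  rw [intervalIntegral.integral_of_le zero_le_one, ← integral_Icc_eq_integral_Ioc, hGp,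
    integral_comp_mul_eq_sub_integral_deriv_mul_setIntegral zero_le_one
      (measurable_poolMean hP).aemeasurable hmem hf.2.1 hg' hg, hmass, mul_one]

lemma Gam_one (hf : IsDensity f) (hP : IsPoolingSet P) :
    Gam f P 1 = 1 - ∫ x in (0 : ℝ)..1, x * f x := by
  have hmean := integral_comp_poolMean_mul hf hP (g := id) (g' := 1) (integrable_const 1)
    fun x _ => by simp
  simp only [id, Pi.one_apply, one_mul] at hmean
  rw [Gam, ← integral_poolMean_mul hf hP, hmean, sub_sub_cancel]

end PosteriorDistribution

section Payoff

variable {u u' u'' : ℝ → ℝ} {x : ℝ}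

lemma C1AC.integral_deriv (hu : C1AC u u' u'') (hx : x ∈ Icc 0 1) :
    ∫ t in x..1, u' t = u 1 - u x := by
  have hsub : uIcc x 1 ⊆ Icc 0 1 := by
    rw [uIcc_of_le hx.2]
    exact Icc_subset_Icc_left hx.1
  exact intervalIntegral.integral_eq_sub_of_hasDerivAt (fun t ht => hu.1 t (hsub ht))
    (hu.2.1.mono hsub).intervalIntegrable

lemma C1AC.integral_deriv_deriv (hu : C1AC u u' u'') (hx : x ∈ Icc 0 1) :
    ∫ t in x..1, u'' t = u' 1 - u' x := by
  obtain ⟨-, -, hint, hftc⟩ := hu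
  have hint_to : ∀ y ∈ Icc (0 : ℝ) 1, IntervalIntegrable u'' volume 0 y := fun y hy =>
    (intervalIntegrable_iff_integrableOn_Icc_of_le hy.1).2
      (hint.mono_set (Icc_subset_Icc_right hy.2))
  have hone : (1 : ℝ) ∈ Icc 0 1 := right_mem_Icc.2 zero_le_one
  rw [hftc x hx, hftc 1 hone, add_sub_add_left_eq_sub,
    intervalIntegral.integral_interval_sub_left (hint_to 1 hone) (hint_to x hx)]

lemma C1AC.integral_deriv_mul_Gp {f : ℝ → ℝ} {P : Set ℝ} (hu : C1AC u u' u'') (hf : IsDensity f)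
    (hP : IsPoolingSet P) :
    ∫ t in (0 : ℝ)..1, u' t * Gp f P t =
      u' 1 * Gam f P 1 - ∫ t in (0 : ℝ)..1, u'' t * Gam f P t := by
  simpa only [Gam] using intervalIntegral_mul_eq_sub_integral_deriv_mul_primitive zero_le_one
    ((monotoneOn_Gp hf hP).integrableOn_isCompact isCompact_Icc) hu.2.2.1
    fun _ => hu.integral_deriv_deriv

theorem C1AC.poolValue_eq {f : ℝ → ℝ} {P : Set ℝ} (hu : C1AC u u' u'') (hf : IsDensity f)
    (hP : IsPoolingSet P) :
    poolValue f u P = u 1 - u' 1 * (1 - ∫ t in (0 : ℝ)..1, t * f t) +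
      ∫ t in (0 : ℝ)..1, u'' t * Gam f P t :=
  calc poolValue f u P
      = u 1 - ∫ t in (0 : ℝ)..1, u' t * Gp f P t :=
        integral_comp_poolMean_mul hf hP (hu.2.1.integrableOn_compact isCompact_Icc)
          fun _ => hu.integral_deriv
    _ = u 1 - u' 1 * Gam f P 1 + ∫ t in (0 : ℝ)..1, u'' t * Gam f P t := by
        rw [hu.integral_deriv_mul_Gp hf hP, ← sub_add]
    _ = u 1 - u' 1 * (1 - ∫ t in (0 : ℝ)..1, t * f t) +
          ∫ t in (0 : ℝ)..1, u'' t * Gam f P t := by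
        rw [Gam_one hf hP]

end Payoff

/-- the double integration-by-parts identity
`∫_0^1 u dG_P = u(1) − u'(1)(1 − E_F[θ]) + ∫_0^1 u''(θ) Γ_P(θ) dθ`, and hence a
pooling set is optimal iff it maximizes `∫_0^1 u''(θ) Γ_P(θ) dθ` over all open
subsets of `[0,1]`. -/
theorem value_by_parts_and_opt (f : ℝ → ℝ) (hf : IsDensity f)
    (u u' u'' : ℝ → ℝ) (hu : C1AC u u' u'') :
    (∀ P : Set ℝ, IsPoolingSet P →
      poolValue f u P =
        u 1 - u' 1 * (1 - ∫ t in (0:ℝ)..1, t * f t) +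
          ∫ θ in (0:ℝ)..1, u'' θ * Gam f P θ) ∧
    (∀ P : Set ℝ, IsPoolingSet P →
      (IsOptimal f u P ↔ ∀ Q : Set ℝ, IsPoolingSet Q →
        (∫ θ in (0:ℝ)..1, u'' θ * Gam f Q θ) ≤
          ∫ θ in (0:ℝ)..1, u'' θ * Gam f P θ)) := by
  have hvalue : ∀ P, IsPoolingSet P → poolValue f u P =
      u 1 - u' 1 * (1 - ∫ t in (0 : ℝ)..1, t * f t) + ∫ θ in (0 : ℝ)..1, u'' θ * Gam f P θ :=
    fun P hP => hu.poolValue_eq hf hP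
  refine ⟨hvalue, fun P hP => ?_⟩
  rw [IsOptimal, and_iff_right hP]
  refine forall₂_congr fun Q hQ => ?_
  rw [hvalue P hP, hvalue Q hQ, add_le_add_iff_left]
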